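/- Let R be a Noetherian ring, N ⊊ M finitely generated R-modules, and X ⊆ Ass(M/N) an open subset of Ass(M/N) (in the subspace topology from Spec R). Then the primary decompositions of N in M are independent over X: for any two irredundant minimal primary decompositions N = Q₁ ∩ ... ∩ Q_s = Q₁' ∩ ... ∩ Q_s' with Q_i, Q_i' both P_i-primary and X = {P₁, ..., P_r}, one has Q₁ ∩ ... ∩ Q_r = Q₁' ∩ ... ∩ Q_r'. -/

import Mathlib

open Submodule

variable {R M : Type*} [CommRing R] [AddCommGroup M] [Module R M]

/-- The saturation `(N :_M J^∞) = ∪ₙ (N :_M Jⁿ)`. -/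
def sat (J : Ideal R) (N : Submodule R M) : Submodule R M :=
  ⨆ n : ℕ, ⨅ r ∈ (J ^ n : Ideal R), N.comap (LinearMap.lsmul R M r)

/-- `Jⁿ L ⊓ N ≤ J^(n-k) N` for all `n ≥ k`, i.e. the Artin–Rees number is at most `k`. -/
def ARle (J : Ideal R) (N L : Submodule R M) (k : ℕ) : Prop :=
  ∀ n, k ≤ n → (J ^ n • L) ⊓ N ≤ J ^ (n - k) • N

/-- The Artin–Rees number `AR(J, N ⊆ L)`. -/
noncomputable def AR (J : Ideal R) (N L : Submodule R M) : ℕ := sInf {k | ARle J N L k}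

/-- `N = ⨅ i, Q i` is an irredundant minimal primary decomposition, with `Q i` being
`P i`-primary. -/
def IsMinPD (N : Submodule R M) {s : ℕ} (P : Fin s → Ideal R) (Q : Fin s → Submodule R M) :
    Prop :=
  (∀ i, associatedPrimes R (M ⧸ Q i) = {P i}) ∧
  Function.Injective P ∧
  N = ⨅ i, Q i ∧
  ∀ i : Fin s, N ≠ ⨅ j ∈ ({i}ᶜ : Set (Fin s)), Q j

/-- `Q` is a `P`-primary component of `N` in `M`: it occurs as the `P`-primary component of
some irredundant minimal primary decomposition of `N` in `M`. -/
def IsPrimaryComponent (N : Submodule R M) (P : Ideal R) (Q : Submodule R M) : Prop :=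
  ∃ (s : ℕ) (P' : Fin s → Ideal R) (Q' : Fin s → Submodule R M) (i : Fin s),
    IsMinPD N P' Q' ∧ P' i = P ∧ Q' i = Q
lemma aux_nilp [IsNoetherianRing R] [Module.Finite R M] (Q : Submodule R M) (p : Ideal R)
    (h : associatedPrimes R (M ⧸ Q) = {p}) (a : R) (ha : a ∈ p) :
    ∃ n : ℕ, ∀ x : M, a ^ n • x ∈ Q := by
  have h1 : a ∈ (Module.annihilator R (M ⧸ Q)).radical := by
    rw [← Ideal.sInf_minimalPrimes]
    refine Submodule.mem_sInf.2 fun q hq => ?_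
    have h2 := Module.associatedPrimes.minimalPrimes_annihilator_subset_associatedPrimes R (M ⧸ Q) hq
    rw [h] at h2
    rw [Set.mem_singleton_iff.1 h2]
    exact ha
  obtain ⟨n, hn⟩ := h1
  refine ⟨n, fun x => ?_⟩
  have := Module.mem_annihilator.1 hn (Submodule.Quotient.mk x)
  rwa [← Submodule.Quotient.mk_smul, Submodule.Quotient.mk_eq_zero] at this

lemma aux_reg [IsNoetherianRing R] (Q : Submodule R M) (p : Ideal R)
    (h : associatedPrimes R (M ⧸ Q) = {p}) (a : R) (ha : a ∉ p) (x : M) (hx : a • x ∈ Q) :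
    x ∈ Q := by
  by_contra hxQ
  have h1 := biUnion_associatedPrimes_eq_zero_divisors R (M ⧸ Q)
  have h2 : a ∈ { r : R | ∃ x : M ⧸ Q, x ≠ 0 ∧ r • x = 0 } := by
    refine ⟨Submodule.Quotient.mk x, ?_, ?_⟩
    · rwa [Ne, Submodule.Quotient.mk_eq_zero]
    · rwa [← Submodule.Quotient.mk_smul, Submodule.Quotient.mk_eq_zero]
  rw [← h1, h] at h2
  simp at h2
  exact ha h2

lemma aux_ass [IsNoetherianRing R] (N : Submodule R M) {s : ℕ} (P : Fin s → Ideal R)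
    (Q : Fin s → Submodule R M) (h : IsMinPD N P Q) (j : Fin s) :
    P j ∈ associatedPrimes R (M ⧸ N) := by
  obtain ⟨h1, -, h3, h4⟩ := h
  set L : Submodule R M := ⨅ i ∈ ({j}ᶜ : Set (Fin s)), Q i with hL
  have hNL : N ≤ L := by
    rw [h3, hL]
    exact le_iInf₂ fun i _ => iInf_le _ i
  have hNQ : N ≤ Q j := h3 ▸ iInf_le _ j
  have hQ : ∀ x ∈ L, x ∈ Q j → x ∈ N := by
    intro x hx hxj
    rw [h3, Submodule.mem_iInf]
    intro i
    by_cases hi : i = j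
    · exact hi ▸ hxj
    · simp only [hL, Submodule.mem_iInf] at hx
      exact hx i hi
  have hf : Function.Injective ((N.comap L.subtype).mapQ N L.subtype le_rfl) := by
    rw [← LinearMap.ker_eq_bot]
    apply Submodule.ker_liftQ_eq_bot
    intro x hx
    simpa using hx
  have hg : Function.Injective ((N.comap L.subtype).mapQ (Q j) L.subtype
      (fun x hx => hNQ hx)) := by
    rw [← LinearMap.ker_eq_bot]
    apply Submodule.ker_liftQ_eq_bot
    intro x hx
    exact hQ x x.2 (by simpa using hx)
  have : Nontrivial (L ⧸ N.comap L.subtype) := by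
    rw [Submodule.Quotient.nontrivial_iff]
    intro ht
    refine h4 j (le_antisymm hNL fun x hx => ?_)
    have : (⟨x, hx⟩ : L) ∈ N.comap L.subtype := ht ▸ Submodule.mem_top
    exact this
  obtain ⟨p, hp⟩ := associatedPrimes.nonempty R (L ⧸ N.comap L.subtype)
  have e := associatedPrimes.subset_of_injective hg hp
  rw [h1 j, Set.mem_singleton_iff] at e
  exact e ▸ associatedPrimes.subset_of_injective hf hp

lemma aux_le [IsNoetherianRing R] [Module.Finite R M]
    (N : Submodule R M) (X : Set (Ideal R))
    (hopen : ∀ P ∈ X, ∀ P' ∈ associatedPrimes R (M ⧸ N), P' ≤ P → P' ∈ X)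
    (s : ℕ) (P : Fin s → Ideal R) (Q Q' : Fin s → Submodule R M)
    (hPD : IsMinPD N P Q) (hPD' : IsMinPD N P Q') :
    (⨅ i ∈ {i : Fin s | P i ∈ X}, Q i) ≤ ⨅ i ∈ {i : Fin s | P i ∈ X}, Q' i := by
  refine le_iInf₂ fun k hk x hx => ?_
  have hkp : (P k).IsPrime := (aux_ass N P Q hPD k).1
  have key : ∀ j, ∃ a : R, a ∉ P k ∧ a • x ∈ Q j := by
    intro j
    by_cases hj : P j ∈ X
    · refine ⟨1, fun h1 => hkp.ne_top ((Ideal.eq_top_iff_one _).2 h1), ?_⟩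
      simp only [Submodule.mem_iInf] at hx
      simpa using hx j hj
    · have : ¬ P j ≤ P k := fun hle => hj (hopen _ hk _ (aux_ass N P Q hPD j) hle)
      obtain ⟨a, ha, hak⟩ := SetLike.not_le_iff_exists.1 this
      obtain ⟨n, hn⟩ := aux_nilp (Q j) (P j) (hPD.1 j) a ha
      exact ⟨a ^ n, fun h => hak (hkp.mem_of_pow_mem n h), hn x⟩
  choose a ha hax using key
  refine aux_reg (Q' k) (P k) (hPD'.1 k) (∏ j, a j) ?_ x ?_
  · intro h
    obtain ⟨j, -, hj⟩ := (hkp.prod_mem_iff).1 h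
    exact ha j hj
  · have hN : (∏ j, a j) • x ∈ N := by
      rw [hPD.2.2.1, Submodule.mem_iInf]
      intro j
      rw [← Finset.prod_erase_mul _ _ (Finset.mem_univ j), mul_smul]
      exact Submodule.smul_mem _ _ (hax j)
    rw [hPD'.2.2.1, Submodule.mem_iInf] at hN
    exact hN k

/-- Theorem 2.2, "if" direction: if `X ⊆ Ass(M/N)` is stable under specialization within
`Ass(M/N)` (i.e. open), then the primary decompositions of `N` in `M` are independent
over `X`. -/
theorem open_imp_indep [IsNoetherianRing R] [Module.Finite R M]
    (N : Submodule R M) (hN : N ≠ ⊤) (X : Set (Ideal R))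
    (hX : X ⊆ associatedPrimes R (M ⧸ N))
    (hopen : ∀ P ∈ X, ∀ P' ∈ associatedPrimes R (M ⧸ N), P' ≤ P → P' ∈ X)
    (s : ℕ) (P : Fin s → Ideal R) (Q Q' : Fin s → Submodule R M)
    (hPD : IsMinPD N P Q) (hPD' : IsMinPD N P Q') :
    (⨅ i ∈ {i : Fin s | P i ∈ X}, Q i) = ⨅ i ∈ {i : Fin s | P i ∈ X}, Q' i := by 
  exact le_antisymm (aux_le N X hopen s P Q Q' hPD hPD') (aux_le N X hopen s P Q' Q hPD' hPD)
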